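/- Let c be a metric on X, P and Q probability measures on X with W₁(Q, P) > ρ > 0, and define the mixture Q' = (1 − u)·Q + u·P with u = 1 − ρ / W₁(Q, P). Then W₁(Q', P) = ρ and W₁(Q', Q) = W₁(Q, P) − ρ. -/

import Mathlib

open MeasureTheory ENNReal

/-- Wasserstein-1 distance between two measures, defined as the infimum over
couplings (probability measures on `X × X` with the given marginals) of the
expected distance. -/
noncomputable def W1 {X : Type*} [MeasurableSpace X] [PseudoEMetricSpace X]
    (P Q : Measure X) : ℝ≥0∞ :=
  ⨅ π ∈ {π : Measure (X × X) |
      IsProbabilityMeasure π ∧ π.map Prod.fst = P ∧ π.map Prod.snd = Q},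
    ∫⁻ p, edist p.1 p.2 ∂π

/-! Write `Q' = s • Q + t • P` with `s + t = 1` and `W = W1 Q P`. Joint convexity of `W1` gives
`W1 Q' P ≤ s * W` and `W1 Q' Q ≤ t * W`; the triangle inequality makes the two left-hand sides add
up to at least `W = s * W + t * W`, so both bounds are equalities as soon as `W` is finite.

The triangle inequality is the difficulty: `X` need be neither separable nor Radon, so two couplings
sharing a marginal cannot be glued by disintegration, and `edist` need not be measurable on `X × X`,
so that `∫⁻` is a lower integral. The couplings are instead glued only up to `ε`, by matching the
cells, of diameter at most `ε`, of a partition of `X` whose unions are all measurable. Any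
measurable set of a product `E × F` is a preimage under some `Prod.map id b` with `b : F → ℝ`, so
the glued measure is determined by its images on `E × ℝ`, and these require only the conditional
laws of real functions, which always exist. Since the cells form a discrete space, an iterated lower
integral over them is at most the lower integral of the composition-product, which is what passes
the cost to the glued measure. -/

open ProbabilityTheory Set

section LowerIntegral

lemma exists_upperSemicontinuous_le_lt_lintegral {Ω : Type*} [TopologicalSpace Ω]
    [MeasurableSpace Ω] [BorelSpace Ω] {μ : Measure Ω} [μ.WeaklyRegular] [IsFiniteMeasure μ]
    (h : Ω → ℝ≥0∞) {r : ℝ≥0∞} (hr : r < ∫⁻ s, h s ∂μ) :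
    ∃ g : Ω → NNReal, UpperSemicontinuous g ∧ (∀ s, (g s : ℝ≥0∞) ≤ h s) ∧
      r < ∫⁻ s, g s ∂μ := by
  obtain ⟨φ, hφh, hφ⟩ : ∃ φ : SimpleFunc Ω NNReal, (∀ s, (φ s : ℝ≥0∞) ≤ h s) ∧
      r < ∫⁻ s, φ s ∂μ := by
    rw [lintegral_eq_nnreal] at hr
    simpa only [lt_iSup_iff, ← SimpleFunc.lintegral_eq_lintegral, SimpleFunc.map_apply,
      exists_prop] using hr
  have hφ_fin : ∫⁻ s, φ s ∂μ ≠ ∞ := by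
    obtain ⟨C, hC⟩ := φ.finite_range.bddAbove
    exact (IsFiniteMeasure.lintegral_lt_top_of_bounded_to_ennreal μ
      ⟨C, fun s ↦ ENNReal.coe_le_coe.2 (hC (mem_range_self s))⟩).ne
  obtain ⟨ε, hε, hrε⟩ := ENNReal.lt_iff_exists_add_pos_lt.1 hφ
  obtain ⟨g, hgφ, hg, hφg⟩ := exists_upperSemicontinuous_le_lintegral_le φ hφ_fin
    (ENNReal.coe_pos.2 hε).ne'
  exact ⟨g, hg, fun s ↦ (ENNReal.coe_le_coe.2 (hgφ s)).trans (hφh s),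
    lt_of_add_lt_add_right (hrε.trans_le hφg)⟩

variable {I Ω : Type*} [MeasurableSpace I] [DiscreteMeasurableSpace I] [TopologicalSpace Ω]
  [MeasurableSpace Ω]

lemma measurable_uncurry_of_upperSemicontinuous {β : Type*} [SecondCountableTopology Ω]
    [OpensMeasurableSpace Ω] [TopologicalSpace β] [LinearOrder β] [OrderTopology β]
    [SecondCountableTopology β] [MeasurableSpace β] [BorelSpace β] {g : I → Ω → β}
    (hg : ∀ i, UpperSemicontinuous (g i)) : Measurable fun x : I × Ω ↦ g x.1 x.2 := by
  refine measurable_of_Iio fun r ↦ ?_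
  let basis := TopologicalSpace.countableBasis Ω
  have preimage_eq : (fun x : I × Ω ↦ g x.1 x.2) ⁻¹' Iio r =
      ⋃ B ∈ basis, {i | B ⊆ g i ⁻¹' Iio r} ×ˢ B := by
    ext ⟨i, s⟩
    have mem_iff := (TopologicalSpace.isBasis_countableBasis Ω).mem_nhds_iff (a := s)
      (s := g i ⁻¹' Iio r)
    rw [((hg i).isOpen_preimage r).mem_nhds_iff] at mem_iff
    simpa [basis, and_comm, and_left_comm, and_assoc] using mem_iff
  rw [preimage_eq]
  exact .biUnion (TopologicalSpace.countable_countableBasis Ω) fun B hB ↦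
    MeasurableSet.of_discrete.prod
      (TopologicalSpace.isOpen_of_mem_countableBasis hB).measurableSet

lemma lintegral_lintegral_le_lintegral_compProd [SecondCountableTopology Ω]
    [TopologicalSpace.PseudoMetrizableSpace Ω] [BorelSpace Ω] (μ : Measure I) [SFinite μ]
    (κ : Kernel I Ω) [IsFiniteKernel κ] (h : I × Ω → ℝ≥0∞) :
    ∫⁻ i, ∫⁻ s, h (i, s) ∂κ i ∂μ ≤ ∫⁻ x, h x ∂(μ ⊗ₘ κ) := by
  have exists_minorant (q : ℚ) (i : I) : ∃ g : Ω → NNReal, UpperSemicontinuous g ∧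
      (∀ s, (g s : ℝ≥0∞) ≤ h (i, s)) ∧
      (ENNReal.ofReal q < ∫⁻ s, h (i, s) ∂κ i → ENNReal.ofReal q < ∫⁻ s, g s ∂κ i) := by
    by_cases hq : ENNReal.ofReal q < ∫⁻ s, h (i, s) ∂κ i
    · obtain ⟨g, hg, hgh, hlt⟩ := exists_upperSemicontinuous_le_lt_lintegral (fun s ↦ h (i, s)) hq
      exact ⟨g, hg, hgh, fun _ ↦ hlt⟩
    · exact ⟨fun _ ↦ 0, upperSemicontinuous_const, by simp, fun hq' ↦ absurd hq' hq⟩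
  choose g hg hgh hlt using exists_minorant
  have measurable_iSup_g : Measurable fun x : I × Ω ↦ ⨆ q, (g q x.1 x.2 : ℝ≥0∞) :=
    .iSup fun q ↦ (measurable_uncurry_of_upperSemicontinuous (hg q)).coe_nnreal_ennreal
  calc ∫⁻ i, ∫⁻ s, h (i, s) ∂κ i ∂μ
      ≤ ∫⁻ i, ∫⁻ s, ⨆ q, (g q i s : ℝ≥0∞) ∂κ i ∂μ := by
        refine lintegral_mono fun i ↦ le_of_forall_lt fun r hr ↦ ?_
        obtain ⟨q, -, hrq, hq⟩ := ENNReal.lt_iff_exists_rat_btwn.1 hr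
        exact hrq.trans ((hlt q i hq).trans_le
          (lintegral_mono fun s ↦ le_iSup (fun q ↦ (g q i s : ℝ≥0∞)) q))
    _ = ∫⁻ x, ⨆ q, (g q x.1 x.2 : ℝ≥0∞) ∂(μ ⊗ₘ κ) :=
        (Measure.lintegral_compProd measurable_iSup_g).symm
    _ ≤ ∫⁻ x, h x ∂(μ ⊗ₘ κ) := lintegral_mono fun x ↦ iSup_le fun q ↦ hgh q x.1 x.2

lemma lintegral_lintegral_condDistrib_le {F : Type*} [MeasurableSpace F] [PolishSpace Ω]
    [BorelSpace Ω] [Nonempty Ω] {ν : Measure F} [IsFiniteMeasure ν] {b : F → Ω} {q : F → I}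
    (hb : Measurable b) (h : I × Ω → ℝ≥0∞) :
    ∫⁻ i, ∫⁻ s, h (i, s) ∂condDistrib b q ν i ∂(ν.map q) ≤ ∫⁻ f, h (q f, b f) ∂ν :=
  calc ∫⁻ i, ∫⁻ s, h (i, s) ∂condDistrib b q ν i ∂(ν.map q)
      ≤ ∫⁻ x, h x ∂(ν.map q ⊗ₘ condDistrib b q ν) :=
        lintegral_lintegral_le_lintegral_compProd _ _ h
    _ = ∫⁻ x, h x ∂(ν.map fun f ↦ (q f, b f)) := by rw [compProd_map_condDistrib hb.aemeasurable]
    _ ≤ ∫⁻ f, h (q f, b f) ∂ν := lintegral_map_le _ _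

end LowerIntegral

section RealFactors

variable {E F : Type*} [MeasurableSpace E] [MeasurableSpace F]

lemma exists_measurable_real_forall_eq_comp {b : ℕ → F → ℝ} (hb : ∀ n, Measurable (b n)) :
    ∃ b' : F → ℝ, Measurable b' ∧ ∀ n, ∃ r : ℝ → ℝ, Measurable r ∧ b n = r ∘ b' := by
  have hφ := measurableEmbedding_embeddingReal (ℕ → ℝ)
  refine ⟨fun f ↦ embeddingReal (ℕ → ℝ) fun n ↦ b n f,
    hφ.measurable.comp (measurable_pi_lambda _ hb), fun n ↦
    ⟨fun x ↦ hφ.invFun x n, (measurable_pi_apply n).comp hφ.measurable_invFun, ?_⟩⟩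
  ext f
  simp [hφ.leftInverse_invFun _]

lemma exists_measurable_real_forall_comap_le {b : ℕ → F → ℝ} (hb : ∀ n, Measurable (b n)) :
    ∃ b' : F → ℝ, Measurable b' ∧ ∀ n,
      MeasurableSpace.comap (Prod.map (id : E → E) (b n)) inferInstance ≤
        MeasurableSpace.comap (Prod.map id b') inferInstance := by
  obtain ⟨b', hb', hfac⟩ := exists_measurable_real_forall_eq_comp hb
  refine ⟨b', hb', fun n ↦ ?_⟩
  obtain ⟨r, hr, hbr⟩ := hfac n
  have hcomp : Prod.map id (b n) = Prod.map id r ∘ Prod.map (id : E → E) b' := by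
    rw [hbr, Prod.map_comp_map, Function.comp_id]
  rw [hcomp, ← MeasurableSpace.comap_comp]
  exact MeasurableSpace.comap_mono (measurable_id.prodMap hr).comap_le

lemma exists_measurableSet_comap_prodMap_real {M : Set (E × F)} (hM : MeasurableSet M) :
    ∃ b : F → ℝ, Measurable b ∧
      MeasurableSet[MeasurableSpace.comap (Prod.map id b) inferInstance] M := by
  induction M, hM using MeasurableSpace.induction_on_inter generateFrom_prod.symm
    isPiSystem_prod with
  | empty => exact ⟨0, measurable_zero, @MeasurableSet.empty _ (_)⟩
  | basic _ hAB =>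
    obtain ⟨A, hA, B, hB, rfl⟩ := hAB
    refine ⟨B.indicator 1, measurable_one.indicator hB, A ×ˢ {1},
      MeasurableSet.prod hA (.singleton 1), ?_⟩
    ext ⟨e, f⟩
    simpa using fun _ ↦ indicator_eq_one_iff_mem ℝ
  | compl _ _ ih =>
    obtain ⟨b, hb, h⟩ := ih
    exact ⟨b, hb, h.compl⟩
  | iUnion _ _ _ ih =>
    choose b hb h using ih
    obtain ⟨b', hb', hle⟩ := exists_measurable_real_forall_comap_le (E := E) hb
    exact ⟨b', hb', .iUnion fun n ↦ hle n _ (h n)⟩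

lemma exists_forall_measurableSet_comap_prodMap_real {M : ℕ → Set (E × F)}
    (hM : ∀ n, MeasurableSet (M n)) :
    ∃ b : F → ℝ, Measurable b ∧
      ∀ n, MeasurableSet[MeasurableSpace.comap (Prod.map id b) inferInstance] (M n) := by
  choose b hb h using fun n ↦ exists_measurableSet_comap_prodMap_real (hM n)
  obtain ⟨b', hb', hle⟩ := exists_measurable_real_forall_comap_le (E := E) hb
  exact ⟨b', hb', fun n ↦ hle n _ (h n)⟩

lemma exists_eq_comp_prodMap_real {Y : Type*} [MeasurableSpace Y] [StandardBorelSpace Y]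
    [Nonempty Y] {g : E × F → Y} (hg : Measurable g) :
    ∃ (b : F → ℝ) (g' : E × ℝ → Y), Measurable b ∧ Measurable g' ∧ g = g' ∘ Prod.map id b := by
  obtain ⟨b, hb, h⟩ := exists_forall_measurableSet_comap_prodMap_real
    fun n ↦ hg (MeasurableSpace.measurableSet_natGeneratingSequence (α := Y) n)
  have hg_comap : Measurable[MeasurableSpace.comap (Prod.map id b) inferInstance] g := by
    rw [← MeasurableSpace.generateFrom_natGeneratingSequence Y]
    refine @measurable_generateFrom _ _ (_) _ _ ?_
    rintro _ ⟨n, rfl⟩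
    exact h n
  obtain ⟨g', hg', h⟩ := hg_comap.exists_eq_measurable_comp
  exact ⟨b, g', hb, hg', h⟩

lemma measure_ext_of_map_real {μ₁ μ₂ : Measure F}
    (h : ∀ b : F → ℝ, Measurable b → μ₁.map b = μ₂.map b) : μ₁ = μ₂ := by
  ext B hB
  have hb : Measurable (B.indicator (1 : F → ℝ)) := measurable_one.indicator hB
  have hB_eq : B.indicator (1 : F → ℝ) ⁻¹' {1} = B := by
    ext f
    exact indicator_eq_one_iff_mem ℝ
  rw [← hB_eq, ← Measure.map_apply hb (.singleton 1), h _ hb,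
    Measure.map_apply hb (.singleton 1)]

end RealFactors

section Extension

variable {E F : Type*} [MeasurableSpace E] [MeasurableSpace F]

/-- A family of measures `V b` on `E × ℝ`, indexed by functions `b : F → ℝ`, that behaves like the
images of a single measure on `E × F` under the measurable maps `Prod.map id b`. -/
structure IsCompatibleFamily (V : (F → ℝ) → Measure (E × ℝ)) : Prop where
  map_comp : ∀ b, Measurable b → ∀ r : ℝ → ℝ, Measurable r →
    V (r ∘ b) = (V b).map (Prod.map id r)
  null_of_preimage_eq_empty : ∀ b, Measurable b → ∀ N, MeasurableSet N →
    Prod.map id b ⁻¹' N = ∅ → V b N = 0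

namespace IsCompatibleFamily

variable {V : (F → ℝ) → Measure (E × ℝ)}

lemma congr_of_preimage_eq (hV : IsCompatibleFamily V) {b : F → ℝ} (hb : Measurable b)
    {N N' : Set (E × ℝ)} (hN : MeasurableSet N) (hN' : MeasurableSet N')
    (h : Prod.map id b ⁻¹' N = Prod.map id b ⁻¹' N') : V b N = V b N' := by
  refine measure_congr (ae_eq_set.2 ⟨?_, ?_⟩)
  · exact hV.null_of_preimage_eq_empty b hb _ (hN.diff hN') (by simp [preimage_sdiff, h])
  · exact hV.null_of_preimage_eq_empty b hb _ (hN'.diff hN) (by simp [preimage_sdiff, h])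

lemma apply_eq_of_preimage_eq (hV : IsCompatibleFamily V) {b b' : F → ℝ} (hb : Measurable b)
    (hb' : Measurable b') {N N' : Set (E × ℝ)} (hN : MeasurableSet N) (hN' : MeasurableSet N')
    (h : Prod.map id b ⁻¹' N = Prod.map id b' ⁻¹' N') : V b N = V b' N' := by
  obtain ⟨β, hβ, hfac⟩ := exists_measurable_real_forall_eq_comp
    (b := fun n ↦ if n = 0 then b else b') fun n ↦ by split_ifs <;> assumption
  obtain ⟨r, hr, rfl : b = r ∘ β⟩ := hfac 0
  obtain ⟨r', hr', rfl : b' = r' ∘ β⟩ := hfac 1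
  have hr_prod : Measurable (Prod.map (id : E → E) r) := measurable_id.prodMap hr
  have hr'_prod : Measurable (Prod.map (id : E → E) r') := measurable_id.prodMap hr'
  rw [hV.map_comp β hβ r hr, hV.map_comp β hβ r' hr', Measure.map_apply hr_prod hN,
    Measure.map_apply hr'_prod hN']
  refine hV.congr_of_preimage_eq hβ (hr_prod hN) (hr'_prod hN') ?_
  simpa only [← preimage_comp, Prod.map_comp_map, Function.id_comp] using h

lemma iUnion_apply (hV : IsCompatibleFamily V) {b : F → ℝ} (hb : Measurable b) {N : ℕ → Set (E × ℝ)}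
    (hN : ∀ n, MeasurableSet (N n))
    (hdisj : Pairwise (Function.onFun Disjoint fun n ↦ Prod.map id b ⁻¹' N n)) :
    V b (⋃ n, N n) = ∑' n, V b (N n) := by
  refine measure_iUnion₀ (fun m n hmn ↦ ?_) fun n ↦ (hN n).nullMeasurableSet
  exact hV.null_of_preimage_eq_empty b hb _ ((hN m).inter (hN n)) (hdisj hmn).inter_eq

theorem exists_measure_map_eq (hV : IsCompatibleFamily V) :
    ∃ Γ : Measure (E × F), ∀ b, Measurable b → Γ.map (Prod.map id b) = V b := by
  choose b hb N hN hNM using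
    fun (M : Set (E × F)) (hM : MeasurableSet M) ↦ exists_measurableSet_comap_prodMap_real hM
  have apply_eq {M} (hM : MeasurableSet M) {b' N'} (hb' : Measurable b') (hN' : MeasurableSet N')
      (h : Prod.map id b' ⁻¹' N' = M) : V (b M hM) (N M hM) = V b' N' :=
    hV.apply_eq_of_preimage_eq (hb M hM) hb' (hN M hM) hN' ((hNM M hM).trans h.symm)
  refine ⟨Measure.ofMeasurable (fun M hM ↦ V (b M hM) (N M hM)) ?empty ?iUnion, fun b' hb' ↦ ?_⟩
  case empty => exact hV.null_of_preimage_eq_empty _ (hb _ _) _ (hN _ _) (hNM _ _)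
  case iUnion =>
    intro M hM hdisj
    obtain ⟨β, hβ, hMβ⟩ := exists_forall_measurableSet_comap_prodMap_real hM
    choose K hK hKM using hMβ
    calc V (b _ (.iUnion hM)) (N _ (.iUnion hM))
        = V β (⋃ n, K n) :=
          apply_eq _ hβ (.iUnion hK) (by rw [preimage_iUnion]; exact iUnion_congr hKM)
      _ = ∑' n, V β (K n) := hV.iUnion_apply hβ hK (by simpa only [hKM] using hdisj)
      _ = ∑' n, V (b (M n) (hM n)) (N (M n) (hM n)) :=
          tsum_congr fun n ↦ (apply_eq (hM n) hβ (hK n) (hKM n)).symm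
  ext N' hN'
  have hb'_prod : Measurable (Prod.map (id : E → E) b') := measurable_id.prodMap hb'
  rw [Measure.map_apply hb'_prod hN', Measure.ofMeasurable_apply _ (hb'_prod hN')]
  exact apply_eq _ hb' hN' rfl

end IsCompatibleFamily

end Extension

section RelativeProduct

variable {E F I : Type*} [MeasurableSpace E] [MeasurableSpace F] [MeasurableSpace I]
  {μ : Measure E} {ν : Measure F} [SFinite μ] [IsFiniteMeasure ν] {p : E → I} {q : F → I}

/-- The joint law of `e` and `b f` when `(e, f)` is drawn from the relative product of `μ` and `ν`
over `p e = q f`: first `e` is drawn from `μ`, then `b f` from its conditional law given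
`q f = p e`. -/
noncomputable def relProdLaw (μ : Measure E) (ν : Measure F) [IsFiniteMeasure ν] (hp : Measurable p)
    (q : F → I) (b : F → ℝ) : Measure (E × ℝ) :=
  μ ⊗ₘ (condDistrib b q ν).comap p hp

lemma relProdLaw_comp (hp : Measurable p) (hpq : μ.map p = ν.map q) {b : F → ℝ}
    (hb : Measurable b) {r : ℝ → ℝ} (hr : Measurable r) :
    relProdLaw μ ν hp q (r ∘ b) = (relProdLaw μ ν hp q b).map (Prod.map id r) := by
  have condDistrib_eq : condDistrib (r ∘ b) q ν =ᵐ[μ.map p] (condDistrib b q ν).map r := by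
    rw [hpq]
    exact condDistrib_comp q hb.aemeasurable hr
  rw [relProdLaw, relProdLaw, ← Measure.compProd_map hr]
  refine Measure.compProd_congr ?_
  filter_upwards [ae_of_ae_map hp.aemeasurable condDistrib_eq] with e he
  rw [Kernel.comap_apply, he, Kernel.map_apply _ hr, Kernel.map_apply _ hr, Kernel.comap_apply]

lemma fst_relProdLaw (hp : Measurable p) (b : F → ℝ) : (relProdLaw μ ν hp q b).fst = μ :=
  Measure.fst_compProd _ _

lemma snd_relProdLaw (hp : Measurable p) (hq : Measurable q) (hpq : μ.map p = ν.map q) {b : F → ℝ}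
    (hb : Measurable b) : (relProdLaw μ ν hp q b).snd = ν.map b := by
  rw [relProdLaw, Measure.snd_compProd, ← Kernel.comp_deterministic_eq_comap, ← Measure.comp_assoc,
    Measure.deterministic_comp_eq_map, hpq, condDistrib_comp_map hq.aemeasurable hb.aemeasurable]

variable [DiscreteMeasurableSpace I]

lemma lintegral_relProdLaw_le_add_lintegral (hp : Measurable p) (hpq : μ.map p = ν.map q)
    {b : F → ℝ} (hb : Measurable b) {g : E × ℝ → ℝ≥0∞} (hg : Measurable g) {c : E → ℝ≥0∞}
    {h : I × ℝ → ℝ≥0∞} (hgh : ∀ e t, g (e, t) ≤ c e + h (p e, t)) :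
    ∫⁻ x, g x ∂relProdLaw μ ν hp q b ≤ ∫⁻ e, c e ∂μ + ∫⁻ f, h (q f, b f) ∂ν := by
  let H (i : I) : ℝ≥0∞ := ∫⁻ t, h (i, t) ∂condDistrib b q ν i
  have hH : Measurable H := .of_discrete
  have hHp : Measurable fun e ↦ H (p e) := hH.comp hp
  calc ∫⁻ x, g x ∂relProdLaw μ ν hp q b
      = ∫⁻ e, ∫⁻ t, g (e, t) ∂condDistrib b q ν (p e) ∂μ := Measure.lintegral_compProd hg
    _ ≤ ∫⁻ e, (c e + H (p e)) ∂μ := by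
        refine lintegral_mono fun e ↦ (lintegral_mono (hgh e)).trans_eq ?_
        rw [lintegral_add_left measurable_const, lintegral_const, measure_univ, mul_one]
    _ = ∫⁻ e, c e ∂μ + ∫⁻ i, H i ∂(ν.map q) := by
        rw [lintegral_add_right _ hHp, ← hpq, lintegral_map hH hp]
    _ ≤ ∫⁻ e, c e ∂μ + ∫⁻ f, h (q f, b f) ∂ν := by
        gcongr
        exact lintegral_lintegral_condDistrib_le hb h

lemma lintegral_relProdLaw_le (hp : Measurable p) (hpq : μ.map p = ν.map q) {b : F → ℝ}
    (hb : Measurable b) {g : E × ℝ → ℝ≥0∞} (hg : Measurable g) {c₁ : E → ℝ≥0∞} {c₂ : F → ℝ≥0∞}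
    (hgc : ∀ e f, p e = q f → g (e, b f) ≤ c₁ e + c₂ f) :
    ∫⁻ x, g x ∂relProdLaw μ ν hp q b ≤ ∫⁻ e, c₁ e ∂μ + ∫⁻ f, c₂ f ∂ν := by
  let h (x : I × ℝ) : ℝ≥0∞ := ⨅ (f) (_ : q f = x.1 ∧ b f = x.2), c₂ f
  refine (lintegral_relProdLaw_le_add_lintegral (c := c₁) (h := h) hp hpq hb hg
    fun e t ↦ ?_).trans ?_
  · simp only [h, ENNReal.add_iInf]
    refine le_iInf₂ ?_
    rintro f ⟨hf, rfl⟩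
    exact hgc e f hf.symm
  · gcongr with f
    exact iInf₂_le f ⟨rfl, rfl⟩

lemma isCompatibleFamily_relProdLaw (hp : Measurable p) (hpq : μ.map p = ν.map q) :
    IsCompatibleFamily (relProdLaw μ ν hp q) where
  map_comp _ hb _ hr := relProdLaw_comp hp hpq hb hr
  null_of_preimage_eq_empty b hb N hN hempty := by
    have indicator_eq_zero (e f) : N.indicator (1 : E × ℝ → ℝ≥0∞) (e, b f) = 0 := by
      refine indicator_of_notMem (fun hmem ↦ ?_) _
      exact hempty.le (show (e, f) ∈ Prod.map id b ⁻¹' N from hmem)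
    rw [← lintegral_indicator_one hN, ← nonpos_iff_eq_zero]
    simpa using lintegral_relProdLaw_le (c₁ := 0) (c₂ := 0) hp hpq hb
      (measurable_one.indicator hN) fun e f _ ↦ (indicator_eq_zero e f).trans_le zero_le

/- The set `{(e, f) | p e = q f}` may be non-measurable, so `Γ` cannot be said to charge only it;
the last clause, on lower integrals, replaces that assertion. -/
theorem exists_relativeProduct (hp : Measurable p) (hq : Measurable q)
    (hpq : μ.map p = ν.map q) :
    ∃ Γ : Measure (E × F), Γ.fst = μ ∧ Γ.snd = ν ∧
      ∀ (c : E × F → ℝ≥0∞) (c₁ : E → ℝ≥0∞) (c₂ : F → ℝ≥0∞),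
        (∀ e f, p e = q f → c (e, f) ≤ c₁ e + c₂ f) →
        ∫⁻ x, c x ∂Γ ≤ ∫⁻ e, c₁ e ∂μ + ∫⁻ f, c₂ f ∂ν := by
  obtain ⟨Γ, hΓ⟩ := (isCompatibleFamily_relProdLaw hp hpq).exists_measure_map_eq
  have measurable_prodMap {b : F → ℝ} (hb : Measurable b) :
      Measurable (Prod.map (id : E → E) b) := measurable_id.prodMap hb
  refine ⟨Γ, ?_, measure_ext_of_map_real fun b hb ↦ ?_, fun c c₁ c₂ hc ↦ ?_⟩
  · calc Γ.fst = (Γ.map (Prod.map id 0)).fst :=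
          (Measure.map_map measurable_fst (measurable_prodMap measurable_zero)).symm
      _ = μ := by rw [hΓ 0 measurable_zero, fst_relProdLaw]
  · calc Γ.snd.map b = (Γ.map (Prod.map id b)).snd := by
          rw [Measure.snd, Measure.snd, Measure.map_map hb measurable_snd,
            Measure.map_map measurable_snd (measurable_prodMap hb)]
          rfl
      _ = ν.map b := by rw [hΓ b hb, snd_relProdLaw hp hq hpq hb]
  · obtain ⟨g, hg, hgc, lintegral_c⟩ := exists_measurable_le_lintegral_eq Γ c
    obtain ⟨b, g', hb, hg', rfl⟩ := exists_eq_comp_prodMap_real hg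
    calc ∫⁻ x, c x ∂Γ = ∫⁻ x, g' x ∂relProdLaw μ ν hp q b := by
          rw [lintegral_c, ← hΓ b hb, lintegral_map hg' (measurable_prodMap hb)]
          rfl
      _ ≤ ∫⁻ e, c₁ e ∂μ + ∫⁻ f, c₂ f ∂ν :=
          lintegral_relProdLaw_le hp hpq hb hg' fun e f hef ↦ (hgc (e, f)).trans (hc e f hef)

end RelativeProduct

section SmallPartition

variable {X : Type*} [PseudoEMetricSpace X]

lemma locallyFinite_of_forall_ne_le_edist {ι : Type*} {s : ι → Set X} {δ : ℝ≥0∞} (hδ : 0 < δ)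
    (hs : ∀ i j, i ≠ j → ∀ x ∈ s i, ∀ y ∈ s j, δ ≤ edist x y) : LocallyFinite s := by
  refine fun a ↦ ⟨Metric.eball a (δ / 2), Metric.eball_mem_nhds a (ENNReal.half_pos hδ.ne'), ?_⟩
  refine Set.Subsingleton.finite ?_
  rintro i ⟨x, hxi, hxa⟩ j ⟨y, hyj, hya⟩
  by_contra hij
  have edist_lt : edist x y < δ := calc
    edist x y ≤ edist x a + edist y a := edist_triangle_right x y a
    _ < δ / 2 + δ / 2 := ENNReal.add_lt_add hxa hya
    _ = δ := ENNReal.add_halves δ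
  exact (hs i j hij x hxi y hyj).not_gt edist_lt

lemma isClosed_biUnion_edist_le_and_forall_lt_le_edist [LinearOrder X] {u r : ℝ≥0∞}
    (hur : u < r) (S : Set X) :
    IsClosed (⋃ y ∈ S, {x | edist x y ≤ u ∧ ∀ z < y, r ≤ edist x z}) := by
  let cell (y : X) : Set X := {x | edist x y ≤ u ∧ ∀ z < y, r ≤ edist x z}
  have le_edist_of_lt {y y' x x' : X} (hyy' : y < y') (hx : x ∈ cell y) (hx' : x' ∈ cell y') :
      r - u ≤ edist x x' :=
    tsub_le_iff_right.2 <| calc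
      r ≤ edist x' y := hx'.2 y hyy'
      _ ≤ edist x x' + edist x y := by
        simpa only [edist_comm x' x] using edist_triangle x' x y
      _ ≤ edist x x' + u := by gcongr; exact hx.1
  have cell_locallyFinite : LocallyFinite cell :=
    locallyFinite_of_forall_ne_le_edist (tsub_pos_of_lt hur) fun y y' hne x hx x' hx' ↦
      hne.lt_or_gt.elim (fun hlt ↦ le_edist_of_lt hlt hx hx')
        fun hlt ↦ (le_edist_of_lt hlt hx' hx).trans_eq (edist_comm x' x)
  have isClosed_cell (y : X) : IsClosed (cell y) := by
    simp only [cell, ofPred_and, ofPred_forall]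
    exact (isClosed_le (by fun_prop) (by fun_prop)).inter
      (isClosed_biInter fun z _ ↦ isClosed_le (by fun_prop) (by fun_prop))
  rw [biUnion_eq_iUnion]
  exact (cell_locallyFinite.comp_injective Subtype.val_injective).isClosed_iUnion
    fun y ↦ isClosed_cell y

variable [MeasurableSpace X] [OpensMeasurableSpace X]

lemma measurableSet_preimage_of_forall_lt_le_edist [LinearOrder X] {r : ℝ≥0∞} (hr : 0 < r)
    {idx : X → X} (hidx : ∀ x, edist x (idx x) < r) (hidx_min : ∀ x, ∀ z < idx x, r ≤ edist x z)
    (S : Set X) : MeasurableSet (idx ⁻¹' S) := by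
  obtain ⟨u, -, hur, hu⟩ := exists_seq_strictMono_tendsto' hr
  have idx_eq {n : ℕ} {x y : X} (hxy : edist x y ≤ u n) (hy : ∀ z < y, r ≤ edist x z) :
      idx x = y := by
    refine le_antisymm (not_lt.1 fun hlt ↦ ?_) (not_lt.1 fun hlt ↦ ?_)
    · exact (hxy.trans_lt (hur n).2).not_ge (hidx_min x y hlt)
    · exact (hidx x).not_ge (hy _ hlt)
  have preimage_eq : idx ⁻¹' S =
      ⋃ n, ⋃ y ∈ S, {x | edist x y ≤ u n ∧ ∀ z < y, r ≤ edist x z} := by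
    ext x
    simp only [mem_preimage, mem_iUnion, exists_prop]
    constructor
    · intro hx
      obtain ⟨n, hn⟩ := (hu.eventually_const_lt (hidx x)).exists
      exact ⟨n, idx x, hx, hn.le, hidx_min x⟩
    · rintro ⟨n, y, hy, hxy, hlt⟩
      exact idx_eq hxy hlt ▸ hy
  rw [preimage_eq]
  exact .iUnion fun n ↦
    (isClosed_biUnion_edist_le_and_forall_lt_le_edist (hur n).2 S).measurableSet

lemma exists_measurable_discrete_forall_eq_edist_le.{u} {X : Type u} [PseudoEMetricSpace X]
    [MeasurableSpace X] [OpensMeasurableSpace X] {ε : ℝ≥0∞} (hε : 0 < ε) :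
    ∃ (I : Type u) (_ : MeasurableSpace I) (_ : DiscreteMeasurableSpace I) (idx : X → I),
      Measurable idx ∧ ∀ x y, idx x = idx y → edist x y ≤ ε := by
  classical
  let _ : LinearOrder X := linearOrderOfSTO WellOrderingRel
  have wf : WellFounded fun x y : X ↦ x < y :=
    IsWellFounded.wf (r := (WellOrderingRel : X → X → Prop))
  have near_nonempty (x : X) : {y | edist x y < ε / 2}.Nonempty :=
    ⟨x, by simpa using hε.ne'⟩
  let idx (x : X) : X := wf.min _ (near_nonempty x)
  have edist_idx_lt (x : X) : edist x (idx x) < ε / 2 := wf.min_mem _ (near_nonempty x)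
  have idx_min (x z : X) (hz : z < idx x) : ε / 2 ≤ edist x z :=
    not_lt.1 fun hlt ↦ wf.not_lt_min {y | edist x y < ε / 2} hlt hz
  refine ⟨X, ⊤, inferInstance, idx, fun S _ ↦ measurableSet_preimage_of_forall_lt_le_edist
    (ENNReal.half_pos hε.ne') edist_idx_lt idx_min S, fun x y hxy ↦ ?_⟩
  calc edist x y ≤ edist x (idx x) + edist y (idx x) := edist_triangle_right ..
    _ ≤ ε / 2 + ε / 2 := by
      gcongr
      · exact (edist_idx_lt x).le
      · exact hxy ▸ (edist_idx_lt y).le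
    _ = ε := ENNReal.add_halves ε

end SmallPartition

section Wasserstein

variable {X : Type*} [MeasurableSpace X] [PseudoEMetricSpace X]

lemma W1_map_map_le {Ω : Type*} [MeasurableSpace Ω] (Γ : Measure Ω) [IsProbabilityMeasure Γ]
    {f g : Ω → X} (hf : Measurable f) (hg : Measurable g) :
    W1 (Γ.map f) (Γ.map g) ≤ ∫⁻ ω, edist (f ω) (g ω) ∂Γ := by
  have hfg := hf.prodMk hg
  refine (iInf₂_le (Γ.map fun ω ↦ (f ω, g ω)) ⟨?_, ?_, ?_⟩).trans (lintegral_map_le _ _)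
  · exact Measure.isProbabilityMeasure_map hfg.aemeasurable
  · exact Measure.map_map measurable_fst hfg
  · exact Measure.map_map measurable_snd hfg

lemma W1_self (P : Measure X) [IsProbabilityMeasure P] : W1 P P = 0 := by
  simpa using W1_map_map_le P measurable_id measurable_id

lemma W1_comm (P Q : Measure X) : W1 P Q = W1 Q P := by
  have le_symm (P Q : Measure X) : W1 P Q ≤ W1 Q P := by
    refine le_iInf₂ ?_
    rintro π ⟨_, rfl, rfl⟩
    simpa only [edist_comm] using W1_map_map_le π measurable_snd measurable_fst
  exact (le_symm P Q).antisymm (le_symm Q P)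

lemma W1_triangle [OpensMeasurableSpace X] (P Q R : Measure X) : W1 P R ≤ W1 P Q + W1 Q R := by
  refine ENNReal.le_of_forall_pos_le_add fun ε hε _ ↦ ?_
  obtain ⟨I, _, _, idx, hidx, edist_le⟩ := exists_measurable_discrete_forall_eq_edist_le (X := X)
    (ENNReal.coe_pos.2 hε)
  rw [W1.eq_1 P Q, W1.eq_1 Q R]
  simp only [ENNReal.iInf_add, ENNReal.add_iInf]
  refine le_iInf₂ fun π₂ ⟨_, hQ₂, hR⟩ ↦ le_iInf₂ fun π₁ ⟨_, hP, hQ₁⟩ ↦ ?_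
  have map_idx_eq : π₁.map (idx ∘ Prod.snd) = π₂.map (idx ∘ Prod.fst) := by
    rw [← Measure.map_map hidx measurable_snd, ← Measure.map_map hidx measurable_fst, hQ₁, hQ₂]
  obtain ⟨Γ, hΓ₁, hΓ₂, lintegral_le⟩ := exists_relativeProduct (hidx.comp measurable_snd)
    (hidx.comp measurable_fst) map_idx_eq
  have : IsProbabilityMeasure (Γ.map Prod.fst) := by rwa [← Measure.fst, hΓ₁]
  have : IsProbabilityMeasure Γ := Measure.isProbabilityMeasure_of_map Prod.fst
  calc W1 P R = W1 (Γ.map fun x ↦ x.1.1) (Γ.map fun x ↦ x.2.2) := by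
        rw [← hP, ← hR, ← hΓ₁, ← hΓ₂, Measure.fst, Measure.snd,
          Measure.map_map measurable_fst measurable_fst,
          Measure.map_map measurable_snd measurable_snd]
        rfl
    _ ≤ ∫⁻ x, edist x.1.1 x.2.2 ∂Γ := W1_map_map_le Γ (by fun_prop) (by fun_prop)
    _ ≤ ∫⁻ x, (edist x.1 x.2 + ε) ∂π₁ + ∫⁻ y, edist y.1 y.2 ∂π₂ := by
        refine lintegral_le _ _ _ fun x y hxy ↦ ?_
        grw [edist_triangle4 x.1 x.2 y.1 y.2, edist_le x.2 y.1 hxy]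
    _ = ∫⁻ x, edist x.1 x.2 ∂π₁ + ∫⁻ y, edist y.1 y.2 ∂π₂ + ε := by
        rw [lintegral_add_right _ measurable_const, lintegral_const, measure_univ, mul_one,
          add_right_comm]

lemma W1_smul_add_smul_le (P₁ P₂ Q₁ Q₂ : Measure X) {s t : ℝ≥0∞} (hst : s + t = 1) :
    W1 (s • P₁ + t • P₂) (s • Q₁ + t • Q₂) ≤ s * W1 P₁ Q₁ + t * W1 P₂ Q₂ := by
  obtain rfl | hs := eq_or_ne s 0
  · obtain rfl : t = 1 := by simpa using hst
    simp
  obtain rfl | ht := eq_or_ne t 0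
  · obtain rfl : s = 1 := by simpa using hst
    simp
  have hs_top : s ≠ ∞ := ne_top_of_le_ne_top one_ne_top (hst ▸ le_self_add)
  have ht_top : t ≠ ∞ := ne_top_of_le_ne_top one_ne_top (hst ▸ le_add_self)
  rw [W1.eq_1 P₁ Q₁, W1.eq_1 P₂ Q₂]
  simp only [ENNReal.mul_iInf_of_ne hs hs_top, ENNReal.mul_iInf_of_ne ht ht_top,
    ENNReal.iInf_add, ENNReal.add_iInf]
  refine le_iInf₂ ?_
  rintro π₂ ⟨_, rfl, rfl⟩
  refine le_iInf₂ ?_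
  rintro π₁ ⟨_, rfl, rfl⟩
  have : IsProbabilityMeasure (s • π₁ + t • π₂) := ⟨by simpa using hst⟩
  simpa only [Measure.map_add _ _ measurable_fst, Measure.map_add _ _ measurable_snd,
    Measure.map_smul, lintegral_add_measure, lintegral_smul_measure, smul_eq_mul]
    using W1_map_map_le (s • π₁ + t • π₂) measurable_fst measurable_snd

lemma W1_mixture [OpensMeasurableSpace X] (P Q : Measure X) [IsProbabilityMeasure P]
    [IsProbabilityMeasure Q] (hfin : W1 Q P ≠ ∞) {s t : ℝ≥0∞} (hst : s + t = 1) :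
    W1 (s • Q + t • P) P = s * W1 Q P := by
  have self_eq (R : Measure X) : s • R + t • R = R := by rw [← add_smul, hst, one_smul]
  have le_left : W1 (s • Q + t • P) P ≤ s * W1 Q P := by
    simpa [self_eq, W1_self] using W1_smul_add_smul_le Q P P P hst
  have le_right : W1 Q (s • Q + t • P) ≤ t * W1 Q P := by
    simpa [self_eq, W1_self] using W1_smul_add_smul_le Q Q Q P hst
  have ht_top : t ≠ ∞ := ne_top_of_le_ne_top one_ne_top (hst ▸ le_add_self)
  refine le_left.antisymm ((ENNReal.add_le_add_iff_left (mul_ne_top ht_top hfin)).1 ?_)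
  calc t * W1 Q P + s * W1 Q P = W1 Q P := by rw [← add_mul, add_comm t, hst, one_mul]
    _ ≤ W1 Q (s • Q + t • P) + W1 (s • Q + t • P) P := W1_triangle _ _ _
    _ ≤ t * W1 Q P + W1 (s • Q + t • P) P := by gcongr

end Wasserstein

theorem stmt17_general {X : Type*} [MeasurableSpace X] [PseudoEMetricSpace X]
    [OpensMeasurableSpace X] (P Q : Measure X) [IsProbabilityMeasure P] [IsProbabilityMeasure Q]
    (ρ : ℝ) (hρ : 0 < ρ) (hfin : W1 Q P ≠ ⊤) (hle : ENNReal.ofReal ρ ≤ W1 Q P)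
    (u : ℝ) (hu : u = 1 - ρ / (W1 Q P).toReal) :
    W1 (ENNReal.ofReal (1 - u) • Q + ENNReal.ofReal u • P) P = ENNReal.ofReal ρ ∧
    W1 (ENNReal.ofReal (1 - u) • Q + ENNReal.ofReal u • P) Q
      = W1 Q P - ENNReal.ofReal ρ := by
  set w := (W1 Q P).toReal
  have hW : W1 Q P = ENNReal.ofReal w := (ENNReal.ofReal_toReal hfin).symm
  have hρw : ρ ≤ w := (ENNReal.ofReal_le_iff_le_toReal hfin).1 hle
  have hw0 : 0 < w := hρ.trans_le hρw
  have hu0 : 0 ≤ u := by rw [hu, sub_nonneg, div_le_one hw0]; exact hρw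
  have one_sub_u : 1 - u = ρ / w := by rw [hu, sub_sub_self]
  have hu1 : 0 ≤ 1 - u := by rw [one_sub_u]; positivity
  have hsum : ENNReal.ofReal (1 - u) + ENNReal.ofReal u = 1 := by
    rw [← ENNReal.ofReal_add hu1 hu0, sub_add_cancel, ENNReal.ofReal_one]
  constructor
  · rw [W1_mixture P Q hfin hsum, hW, ← ENNReal.ofReal_mul hu1, one_sub_u,
      div_mul_cancel₀ _ hw0.ne']
  · have hPQ : W1 P Q ≠ ∞ := W1_comm P Q ▸ hfin
    rw [add_comm, W1_mixture Q P hPQ ((add_comm _ _).trans hsum), W1_comm P Q, hW,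
      ← ENNReal.ofReal_mul hu0, ← ENNReal.ofReal_sub _ hρ.le, hu, sub_mul, one_mul,
      div_mul_cancel₀ _ hw0.ne']

/-- If `W₁(Q, P) > ρ > 0` and `Q' = (1 - u)·Q + u·P` with `u = 1 - ρ / W₁(Q, P)`,
then `W₁(Q', P) = ρ` and `W₁(Q', Q) = W₁(Q, P) - ρ`. -/
theorem stmt17 {X : Type*} [MeasurableSpace X] [MetricSpace X] [BorelSpace X]
    (P Q : Measure X) [IsProbabilityMeasure P] [IsProbabilityMeasure Q]
    (ρ : ℝ) (hρ : 0 < ρ) (hfin : W1 Q P ≠ ⊤) (hgt : ENNReal.ofReal ρ < W1 Q P)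
    (u : ℝ) (hu : u = 1 - ρ / (W1 Q P).toReal) :
    W1 (ENNReal.ofReal (1 - u) • Q + ENNReal.ofReal u • P) P = ENNReal.ofReal ρ ∧
    W1 (ENNReal.ofReal (1 - u) • Q + ENNReal.ofReal u • P) Q
      = W1 Q P - ENNReal.ofReal ρ :=
  stmt17_general P Q ρ hρ hfin hgt.le u hu
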